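/- Fix a stationary policy σ : S → A, a resource h ∈ {1,…,H}, and a cost vector μ : A → ℝ with μ 0 = 0; for y ∈ ℝ let c_y : A → ℝ be the cost vector with c_y(h) = y and c_y(a) = μ a for a ≠ h. Then there exists a unique function D : S → A → ℝ satisfying D s a = (if a = h then 1 else 0) + β ∑_{s'} P s a s' · D s' (σ s') for all s, a, and the policy-evaluation fixed point depends affinely on y: Q^σ_{c_y}(s,a) = Q^σ_{c_0}(s,a) − y · D s a for all y ∈ ℝ and all s, a. -/

import Mathlib

/-!
Restricting a solution `Q` of the policy-evaluation equation to the actions `σ` prescribes gives a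
vector `v` with `(1 - β • T) v = r_σ`, where `T` is the transition matrix of the Markov chain
induced by `σ` and `r_σ s = r s (σ s)`; conversely `v` determines `Q`. So solutions exist and are
unique as soon as `1 - β • T` is invertible, which for stochastic `T` and `|β| < 1` follows from
strict diagonal dominance. The equation is linear in the pair `(r, Q)`, and raising the cost of the
resource `h` by `y` subtracts `y` times the indicator of `h` from the reward.
-/

open Matrix

section Invertibility

variable {n : Type*} [Fintype n] [DecidableEq n]

theorem isUnit_one_sub_of_sum_row_norm_lt_one {𝕜 : Type*} [NormedField 𝕜] {K : Matrix n n 𝕜}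
    (hK : ∀ i, ∑ j, ‖K i j‖ < 1) : IsUnit (1 - K) := by
  rw [isUnit_iff_isUnit_det, isUnit_iff_ne_zero]
  refine det_ne_zero_of_sum_row_lt_diag fun i => ?_
  calc ∑ j ∈ Finset.univ.erase i, ‖(1 - K) i j‖
      = ∑ j ∈ Finset.univ.erase i, ‖K i j‖ := by
        refine Finset.sum_congr rfl fun j hj => ?_
        rw [Matrix.sub_apply, one_apply_ne (Finset.ne_of_mem_erase hj).symm, zero_sub, norm_neg]
    _ < 1 - ‖K i i‖ := by
        linarith [hK i, Finset.sum_erase_add _ (fun j => ‖K i j‖) (Finset.mem_univ i)]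
    _ ≤ ‖(1 - K) i i‖ := by
        simpa only [Matrix.sub_apply, one_apply_eq, norm_one] using norm_sub_norm_le (1 : 𝕜) (K i i)

theorem isUnit_one_sub_smul_of_mem_rowStochastic {T : Matrix n n ℝ} (hT : T ∈ rowStochastic ℝ n)
    {β : ℝ} (hβ : |β| < 1) : IsUnit (1 - β • T) := by
  refine isUnit_one_sub_of_sum_row_norm_lt_one fun i => ?_
  calc ∑ j, ‖(β • T) i j‖ = |β| * ∑ j, T i j := by
        simp only [Matrix.smul_apply, smul_eq_mul, Real.norm_eq_abs, abs_mul,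
          abs_of_nonneg (nonneg_of_mem_rowStochastic hT), Finset.mul_sum]
    _ < 1 := by rwa [sum_row_of_mem_rowStochastic hT, mul_one]

end Invertibility

section PolicyEvaluation

variable {k S A : Type*} [CommRing k]

/-- The transition matrix of the Markov chain on states that a stationary policy `σ` induces;
`1 - β • policyTransition P σ` is the matrix whose inverse evaluates `σ`. -/
def policyTransition (P : S → A → S → k) (σ : S → A) : Matrix S S k :=
  of fun s s' => P s (σ s) s'

variable [Fintype S]

/-- `Q` is an action-value function of the stationary policy `σ` for the reward `r`: a fixed point
of the policy-evaluation operator. Costs are absorbed into `r`. -/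
def IsActionValue (P : S → A → S → k) (β : k) (σ : S → A) (r Q : S → A → k) : Prop :=
  ∀ s a, Q s a = r s a + β * ∑ s', P s a s' * Q s' (σ s')

variable {P : S → A → S → k} {β : k} {σ : S → A} {r Q : S → A → k}

theorem IsActionValue.sub_smul {d D : S → A → k} (hQ : IsActionValue P β σ r Q)
    (hD : IsActionValue P β σ d D) (y : k) : IsActionValue P β σ (r - y • d) (Q - y • D) := by
  intro s a
  simp only [Pi.sub_apply, Pi.smul_apply, smul_eq_mul, mul_sub, mul_left_comm _ y,
    Finset.sum_sub_distrib, ← Finset.mul_sum]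
  rw [hQ s a, hD s a]
  ring

variable [DecidableEq S]

theorem one_sub_smul_policyTransition_mulVec_eq_iff {v w : S → k} :
    (1 - β • policyTransition P σ) *ᵥ v = w ↔
      ∀ s, v s = w s + β * ∑ s', P s (σ s) s' * v s' := by
  rw [sub_mulVec, one_mulVec, smul_mulVec, sub_eq_iff_eq_add, funext_iff]
  rfl

theorem isActionValue_iff_exists_stateValue :
    IsActionValue P β σ r Q ↔ ∃ v : S → k,
      (1 - β • policyTransition P σ) *ᵥ v = (fun s => r s (σ s)) ∧
        Q = fun s a => r s a + β * ∑ s', P s a s' * v s' := by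
  simp only [one_sub_smul_policyTransition_mulVec_eq_iff]
  constructor
  · intro hQ
    exact ⟨fun s => Q s (σ s), fun s => hQ s (σ s), funext₂ hQ⟩
  · rintro ⟨v, hv, rfl⟩ s a
    simp only [← hv]

theorem existsUnique_isActionValue (hT : IsUnit (1 - β • policyTransition P σ))
    (r : S → A → k) : ∃! Q, IsActionValue P β σ r Q := by
  have bijective : Function.Bijective (1 - β • policyTransition P σ).mulVec :=
    ⟨mulVec_injective_of_isUnit hT, mulVec_surjective_iff_isUnit.2 hT⟩
  obtain ⟨v, hv, v_unique⟩ := bijective.existsUnique fun s => r s (σ s)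
  refine ⟨_, isActionValue_iff_exists_stateValue.2 ⟨v, hv, rfl⟩, fun Q hQ => ?_⟩
  obtain ⟨w, hw, rfl⟩ := isActionValue_iff_exists_stateValue.1 hQ
  rw [v_unique w hw]

end PolicyEvaluation

theorem sub_update_eq_sub_smul_indicator {k S A : Type*} [Ring k] [DecidableEq A]
    (R : S → A → k) (μ : A → k) (h : A) (y : k) :
    (fun s a => R s a - Function.update μ h y a) =
      (fun s a => R s a - Function.update μ h 0 a) - y • fun _ a => if a = h then 1 else 0 := by
  ext s a
  by_cases ha : a = h <;> simp [Function.update_apply, ha]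

theorem policy_evaluation_affine_in_resource_cost_general
    {k S A : Type*} [CommRing k] [Fintype S] [DecidableEq S] [DecidableEq A]
    (R : S → A → k) (P : S → A → S → k) (β : k) (σ : S → A)
    (hT : IsUnit (1 - β • policyTransition P σ)) (h : A) (μ : A → k) (Qc : k → S → A → k)
    (hQc : ∀ y, IsActionValue P β σ (fun s a => R s a - Function.update μ h y a) (Qc y)) :
    (∃! D, IsActionValue P β σ (fun _ a => if a = h then 1 else 0) D) ∧
      ∀ D, IsActionValue P β σ (fun _ a => if a = h then 1 else 0) D →
        ∀ y s a, Qc y s a = Qc 0 s a - y * D s a := by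
  refine ⟨existsUnique_isActionValue hT _, fun D hD y s a => ?_⟩
  have shifted : IsActionValue P β σ (fun s a => R s a - Function.update μ h y a)
      (Qc 0 - y • D) := by
    rw [sub_update_eq_sub_smul_indicator]
    exact (hQc 0).sub_smul hD y
  exact congr_fun₂ ((existsUnique_isActionValue hT _).unique (hQc y) shifted) s a

/-- Fix a stationary policy `σ`, a resource `h ≠ 0`, and a cost
vector `μ` with `μ 0 = 0`; for `y : ℝ` let `c_y = Function.update μ h y`.  Then there
is a unique `D : S → A → ℝ` with
`D s a = (if a = h then 1 else 0) + β ∑_{s'} P s a s' · D s' (σ s')`, and the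
policy-evaluation fixed point depends affinely on `y`:
`Q^σ_{c_y}(s,a) = Q^σ_{c_0}(s,a) − y · D s a` for all `y`, `s`, `a`. -/
theorem policy_evaluation_affine_in_resource_cost
    {S : Type*} [Fintype S] [Nonempty S] {H : ℕ}
    (R : S → Fin (H + 1) → ℝ) (P : S → Fin (H + 1) → S → ℝ)
    (hP0 : ∀ s a s', 0 ≤ P s a s') (hP1 : ∀ s a, ∑ s', P s a s' = 1)
    (β : ℝ) (hβ0 : 0 ≤ β) (hβ1 : β < 1)
    (σ : S → Fin (H + 1))
    (h : Fin (H + 1)) (hh : h ≠ 0)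
    (μ : Fin (H + 1) → ℝ) (hμ : μ 0 = 0)
    (Qc : ℝ → S → Fin (H + 1) → ℝ)
    (hQc : ∀ y s a, Qc y s a = R s a - Function.update μ h y a
        + β * ∑ s', P s a s' * Qc y s' (σ s')) :
    (∃! D : S → Fin (H + 1) → ℝ,
      ∀ s a, D s a = (if a = h then (1 : ℝ) else 0)
          + β * ∑ s', P s a s' * D s' (σ s')) ∧
    (∀ D : S → Fin (H + 1) → ℝ,
      (∀ s a, D s a = (if a = h then (1 : ℝ) else 0)
          + β * ∑ s', P s a s' * D s' (σ s')) →
      ∀ (y : ℝ) (s : S) (a : Fin (H + 1)),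
        Qc y s a = Qc 0 s a - y * D s a) := by
  classical
  have hT : policyTransition P σ ∈ rowStochastic ℝ S :=
    mem_rowStochastic_iff_sum.2 ⟨fun s => hP0 s (σ s), fun s => hP1 s (σ s)⟩
  have hβ : |β| < 1 := by rwa [abs_of_nonneg hβ0]
  exact policy_evaluation_affine_in_resource_cost_general R P β σ
    (isUnit_one_sub_smul_of_mem_rowStochastic hT hβ) h μ Qc hQc
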